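/- Let (0, y*) ∈ D. Then V(0, y*, 0) = 0, and the germ of V at the singular point (0, y*, 0) is C^∞-smoothly orbitally equivalent to the germ at 0 of the vector field ξ̇ = ξ, η̇ = η, ζ̇ = 0 (a bicritical node times a trivial factor). -/

import Mathlib

open Filter Topology

/-- Partial derivative of `g : ℝ² → ℝ` with respect to the first coordinate. -/
noncomputable def d1 (g : ℝ × ℝ → ℝ) (q : ℝ × ℝ) : ℝ := fderiv ℝ g q ((1 : ℝ), (0 : ℝ))

/-- Partial derivative of `g : ℝ² → ℝ` with respect to the second coordinate. -/
noncomputable def d2 (g : ℝ × ℝ → ℝ) (q : ℝ × ℝ) : ℝ := fderiv ℝ g q ((0 : ℝ), (1 : ℝ))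

/-- Two vector fields `V`, `N` with marked points `x₀`, `y₀` are `C^∞`-smoothly orbitally
equivalent (as germs) if there are open neighborhoods `U ∋ x₀`, `U' ∋ y₀` with `U`
contained in the domain `Dom`, a `C^∞` diffeomorphism `Φ : U → U'` with `Φ x₀ = y₀`, and
a `C^∞` nowhere-vanishing function `h : U → ℝ` with `DΦ(x)·V(x) = h(x)·N(Φ(x))` on `U`. -/
def OrbEquiv {E : Type*} [NormedAddCommGroup E] [NormedSpace ℝ E]
    (Dom : Set E) (V N : E → E) (x₀ y₀ : E) : Prop :=
  ∃ (U U' : Set E) (Φ Ψ : E → E) (h : E → ℝ),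
    IsOpen U ∧ IsOpen U' ∧ x₀ ∈ U ∧ y₀ ∈ U' ∧ U ⊆ Dom ∧
    ContDiffOn ℝ (⊤ : ℕ∞) Φ U ∧ ContDiffOn ℝ (⊤ : ℕ∞) Ψ U' ∧
    Φ x₀ = y₀ ∧ Set.MapsTo Φ U U' ∧ Set.MapsTo Ψ U' U ∧
    (∀ x ∈ U, Ψ (Φ x) = x) ∧ (∀ y ∈ U', Φ (Ψ y) = y) ∧
    ContDiffOn ℝ (⊤ : ℕ∞) h U ∧ (∀ x ∈ U, h x ≠ 0) ∧
    ∀ x ∈ U, fderiv ℝ Φ x (V x) = h x • N (Φ x)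

/-! After division by the unit `v` the field becomes `P z + R z`, where `P (x, y, p) = (x, 0, p)` is
a projection and `R z = Q z (P z) (P z)` vanishes to second order on the curve `P z = 0` of
equilibria. Let `δ_s z = z + (s - 1) P z`, so that the orbits of `P` are the curves `s ↦ δ_s u`.
Seeking the orbits of `P + R` in the form `s ↦ δ_s (γ s)` leads to an equation `γ' = W (s, γ)`.
Because `R` vanishes to second order, `W` extends smoothly to `s = 0`, so no small divisors or
resonances have to be discussed: the time-one map `γ 0 ↦ γ 1` is a smooth local diffeomorphism, and
the invariance of `W` under `δ` makes it conjugate `P` to `P + R`. Its smoothness follows from the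
inverse function theorem for the integral equation in the Banach space of continuous curves. -/

open Set Metric
open scoped unitInterval ContDiff

universe u

theorem hasFDerivAt_clm_apply_of_eq_zero {𝕜 E F G : Type*} [NontriviallyNormedField 𝕜]
    [NormedAddCommGroup E] [NormedSpace 𝕜 E] [NormedAddCommGroup F] [NormedSpace 𝕜 F]
    [NormedAddCommGroup G] [NormedSpace 𝕜 G] {A : E → F →L[𝕜] G} {m : E → F} {x : E}
    (hA : DifferentiableAt 𝕜 A x) (hm : DifferentiableAt 𝕜 m x) (hAx : A x = 0) (hmx : m x = 0) :
    HasFDerivAt (fun y => A y (m y)) (0 : E →L[𝕜] G) x :=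
  (hA.hasFDerivAt.clm_apply hm.hasFDerivAt).congr_fderiv (by ext; simp [hAx, hmx])

theorem exists_contDiff_eventuallyEq {E F : Type*} [NormedAddCommGroup E] [NormedSpace ℝ E]
    [FiniteDimensional ℝ E] [NormedAddCommGroup F] [NormedSpace ℝ F] {n : ℕ∞} {S : Set E}
    (hS : IsOpen S) {f : E → F} (hf : ContDiffOn ℝ n f S) {x : E} (hx : x ∈ S) :
    ∃ g : E → F, ContDiff ℝ n g ∧ g =ᶠ[𝓝 x] f := by
  obtain ⟨r, hr, hrS⟩ := nhds_basis_closedBall.mem_iff.1 (hS.mem_nhds hx)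
  let φ : ContDiffBump x := ⟨r / 2, r, half_pos hr, half_lt_self hr⟩
  refine ⟨fun y => φ y • f y, ?_, ?_⟩
  · refine contMDiff_iff_contDiff.1 (contMDiff_of_tsupport fun y hy => ?_)
    have hyS : y ∈ S := hrS (φ.tsupport_eq ▸ tsupport_smul_subset_left φ f hy)
    exact (φ.contDiffAt.smul (hf.contDiffAt (hS.mem_nhds hyS))).contMDiffAt
  · filter_upwards [φ.eventuallyEq_one] with y hy
    simp [hy]

theorem exists_openPartialHomeomorph_contDiffOn_symm {𝕜 E F : Type*} [RCLike 𝕜]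
    [NormedAddCommGroup E] [NormedSpace 𝕜 E] [CompleteSpace E] [NormedAddCommGroup F]
    [NormedSpace 𝕜 F] {n : ℕ∞ω} (hn : n ≠ 0) {S : Set E} (hS : IsOpen S) {f : E → F}
    (hf : ContDiffOn 𝕜 n f S) {a : E} (ha : a ∈ S)
    {f' : E ≃L[𝕜] F} (hf' : HasFDerivAt f (f' : E →L[𝕜] F) a) :
    ∃ e : OpenPartialHomeomorph E F, a ∈ e.source ∧ e.source ⊆ S ∧ ⇑e = f ∧
      ContDiffOn 𝕜 n e.symm e.target := by
  have hfS : ∀ x ∈ S, ContDiffAt 𝕜 n f x := fun x hx => hf.contDiffAt (hS.mem_nhds hx)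
  have hf'S : ContinuousOn (fderiv 𝕜 f) S :=
    hf.continuousOn_fderiv_of_isOpen hS (ENat.one_le_iff_ne_zero_withTop.2 hn)
  let T := S ∩ fderiv 𝕜 f ⁻¹' range ContinuousLinearEquiv.toContinuousLinearMap
  have hT : IsOpen T := hf'S.isOpen_inter_preimage hS ContinuousLinearEquiv.isOpen
  let e := ((hfS a ha).toOpenPartialHomeomorph f hf' hn).restrOpen T hT
  refine ⟨e, ⟨(hfS a ha).mem_toOpenPartialHomeomorph_source hf' hn, ha, f', hf'.fderiv.symm⟩,
    fun x hx => hx.2.1, rfl, fun y hy => ContDiffAt.contDiffWithinAt ?_⟩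
  obtain ⟨-, hxS, L, hL⟩ := e.map_target hy
  have hL' : HasFDerivAt f (L : E →L[𝕜] F) (e.symm y) :=
    hL ▸ ((hfS _ hxS).differentiableAt hn).hasFDerivAt
  exact e.contDiffAt_symm hy hL' (hfS _ hxS)

theorem fderiv_symm_apply_fderiv {𝕜 E F : Type*} [NontriviallyNormedField 𝕜]
    [NormedAddCommGroup E] [NormedSpace 𝕜 E] [NormedAddCommGroup F] [NormedSpace 𝕜 F]
    (e : OpenPartialHomeomorph E F) {x : E} (hx : x ∈ e.source)
    (he : DifferentiableAt 𝕜 e x) (hsymm : DifferentiableAt 𝕜 e.symm (e x)) (w : E) :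
    fderiv 𝕜 e.symm (e x) (fderiv 𝕜 e x w) = w := by
  have hid : HasFDerivAt (e.symm ∘ e) (ContinuousLinearMap.id 𝕜 E) x :=
    (hasFDerivAt_id x).congr_of_eventuallyEq (e.eventually_left_inverse hx)
  exact DFunLike.congr_fun ((hsymm.hasFDerivAt.comp x he.hasFDerivAt).unique hid) w

theorem orbEquiv_of_local_conjugacy {E : Type*} [NormedAddCommGroup E] [NormedSpace ℝ E]
    [CompleteSpace E] {Dom O : Set E} {V N : E → E} {y₀ : E} {Ψ : E → E} {h : E → ℝ}
    {L : E ≃L[ℝ] E} (hO : IsOpen O) (hy₀ : y₀ ∈ O) (hΨ : ContDiffOn ℝ ∞ Ψ O)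
    (hΨO : MapsTo Ψ O Dom) (hΨ' : HasFDerivAt Ψ (L : E →L[ℝ] E) y₀)
    (hh : ContDiffOn ℝ ∞ h Dom) (hh0 : ∀ z ∈ Dom, h z ≠ 0)
    (hconj : ∀ y ∈ O, V (Ψ y) = h (Ψ y) • fderiv ℝ Ψ y (N y)) :
    OrbEquiv Dom V N (Ψ y₀) y₀ := by
  obtain ⟨e, hye, heO, rfl, hsymm⟩ :=
    exists_openPartialHomeomorph_contDiffOn_symm (by simp) hO hΨ hy₀ hΨ'
  have hDom : e.target ⊆ Dom := fun z hz => by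
    simpa only [e.right_inv hz] using hΨO (heO (e.map_target hz))
  refine ⟨e.target, e.source, e.symm, e, h, e.open_target, e.open_source, e.map_source hye, hye,
    hDom, hsymm, hΨ.mono heO, e.left_inv hye, e.symm.mapsTo, e.mapsTo, fun z => e.right_inv,
    fun y => e.left_inv, hh.mono hDom, fun z hz => hh0 z (hDom hz), fun z hz => ?_⟩
  obtain ⟨y, hy, rfl⟩ : ∃ y ∈ e.source, e y = z := ⟨e.symm z, e.map_target hz, e.right_inv hz⟩
  rw [hconj y (heO hy), map_smul, e.left_inv hy, fderiv_symm_apply_fderiv e hy]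
  · exact (hΨ.contDiffAt (hO.mem_nhds (heO hy))).differentiableAt (by simp)
  · exact (hsymm.contDiffAt (e.open_target.mem_nhds hz)).differentiableAt (by simp)

section Superposition

variable {K : Type*} [TopologicalSpace K] [CompactSpace K]

/-- The pairing `(A, γ) ↦ (s ↦ A s (γ s))` of continuous families of operators with continuous
families of vectors, as a bounded bilinear map; it expresses derivatives of superposition
operators. -/
noncomputable def pointwiseApply (K E F : Type*) [TopologicalSpace K] [CompactSpace K]
    [NormedAddCommGroup E] [NormedSpace ℝ E] [NormedAddCommGroup F] [NormedSpace ℝ F] :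
    C(K, E →L[ℝ] F) →L[ℝ] C(K, E) →L[ℝ] C(K, F) :=
  LinearMap.mkContinuous₂
    (LinearMap.mk₂ ℝ
      (fun (A : C(K, E →L[ℝ] F)) (γ : C(K, E)) =>
        (⟨fun s => A s (γ s), A.continuous.clm_apply γ.continuous⟩ : C(K, F)))
      (fun _ _ _ => by ext; simp) (fun _ _ _ => by ext; simp)
      (fun _ _ _ => by ext; simp) (fun _ _ _ => by ext; simp))
    1 (fun A γ => by
      rw [one_mul, ContinuousMap.norm_le _ (by positivity)]
      exact fun s => (A s).le_of_opNorm_le_of_le (A.norm_coe_le_norm s) (γ.norm_coe_le_norm s))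

theorem hasFDerivAt_superposition {E F : Type*} [NormedAddCommGroup E] [NormedSpace ℝ E]
    [NormedAddCommGroup F] [NormedSpace ℝ F] {f : C(E, F)} {f' : C(E, E →L[ℝ] F)}
    (hf : ∀ x, HasFDerivAt f (f' x) x) (γ : C(K, E)) :
    HasFDerivAt (fun g : C(K, E) => f.comp g) (pointwiseApply K E F (f'.comp γ)) γ := by
  rw [hasFDerivAt_iff_isLittleO, Asymptotics.isLittleO_iff]
  intro ε hε
  have hf'γ : ∀ᶠ g in 𝓝 γ, dist (f'.comp g) (f'.comp γ) < ε :=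
    (ContinuousMap.continuous_postcomp f').continuousAt (ball_mem_nhds (f'.comp γ) hε)
  obtain ⟨δ, hδ, hball⟩ := eventually_nhds_iff_ball.1 hf'γ
  filter_upwards [ball_mem_nhds γ hδ] with g hg
  rw [ContinuousMap.norm_le _ (by positivity)]
  intro s
  have hsegment : ∀ x ∈ segment ℝ (γ s) (g s), ‖f' x - f' (γ s)‖ ≤ ε := by
    rintro _ ⟨a, b, ha, hb, hab, rfl⟩
    have hmem : a • γ + b • g ∈ ball γ δ := convex_ball γ δ (mem_ball_self hδ) hg ha hb hab
    rw [← dist_eq_norm]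
    exact (ContinuousMap.dist_apply_le_dist s).trans (hball _ hmem).le
  refine (Convex.norm_image_sub_le_of_norm_hasFDerivWithin_le'
    (fun x _ => (hf x).hasFDerivWithinAt) hsegment (convex_segment _ _)
    (left_mem_segment ℝ _ _) (right_mem_segment ℝ _ _)).trans ?_
  exact mul_le_mul_of_nonneg_left ((g - γ).norm_coe_le_norm s) hε.le

theorem contDiff_superposition {E F : Type u} [NormedAddCommGroup E] [NormedSpace ℝ E]
    [NormedAddCommGroup F] [NormedSpace ℝ F] {n : ℕ∞} {f : C(E, F)} (hf : ContDiff ℝ n f) :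
    ContDiff ℝ n (fun γ : C(K, E) => f.comp γ) := by
  refine contDiff_iff_forall_nat_le.2 fun m hm => ?_
  replace hf : ContDiff ℝ m f := hf.of_le (mod_cast hm)
  clear hm
  induction m generalizing F with
  | zero => exact contDiff_zero.2 (ContinuousMap.continuous_postcomp f)
  | succ m ih =>
    have hf' : ContDiff ℝ m (fderiv ℝ f) := hf.fderiv_right le_rfl
    refine contDiff_succ_iff_hasFDerivAt.2 ⟨_,
      (pointwiseApply K E F).contDiff.comp (ih (f := ⟨fderiv ℝ f, hf'.continuous⟩) hf'),
      hasFDerivAt_superposition fun x => (hf.differentiable (by simp) x).hasFDerivAt⟩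

end Superposition

section Picard

variable {E : Type u} [NormedAddCommGroup E] [NormedSpace ℝ E]

/-- The primitive vanishing at `0`, as a bounded operator on continuous curves over `[0, 1]`.
Curves are extended to `ℝ` by constants so that interval integrals make sense. -/
noncomputable def primitive (E : Type*) [NormedAddCommGroup E] [NormedSpace ℝ E] :
    C(I, E) →L[ℝ] C(I, E) :=
  LinearMap.mkContinuous
    { toFun := fun g =>
        ⟨fun t => ∫ s in (0 : ℝ)..t, IccExtend zero_le_one g s,
          (intervalIntegral.continuous_primitive
            (fun _ _ => g.continuous.Icc_extend'.intervalIntegrable _ _) 0).comp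
            continuous_subtype_val⟩
      map_add' := fun f g => by
        ext t
        exact intervalIntegral.integral_add (f.continuous.Icc_extend'.intervalIntegrable _ _)
          (g.continuous.Icc_extend'.intervalIntegrable _ _)
      map_smul' := fun c g => by
        ext t
        exact intervalIntegral.integral_smul c _ }
    1 (fun g => by
      rw [one_mul, ContinuousMap.norm_le _ (norm_nonneg g)]
      intro t
      refine (intervalIntegral.norm_integral_le_of_norm_le_const
        (fun x _ => g.norm_coe_le_norm _)).trans (mul_le_of_le_one_right (norm_nonneg g) ?_)
      rw [sub_zero, abs_of_nonneg t.2.1]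
      exact t.2.2)

theorem primitive_apply (g : C(I, E)) (t : I) :
    primitive E g t = ∫ s in (0 : ℝ)..t, IccExtend zero_le_one g s := rfl

/-- The curve `s ↦ W (s, γ s)` of velocities which a time-dependent vector field `W` prescribes
along `γ`. -/
def velocity (W : C(ℝ × E, E)) (γ : C(I, E)) : C(I, E) :=
  W.comp (ContinuousMap.prodMk ⟨Subtype.val, continuous_subtype_val⟩ γ)

/-- The residual of `γ` in Picard's integral equation: it is the constant `u` exactly when `γ`
solves `γ' = W (s, γ)` with `γ 0 = u`. -/
noncomputable def picardResidual (W : C(ℝ × E, E)) (γ : C(I, E)) : C(I, E) :=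
  γ - primitive E (velocity W γ)

theorem velocity_eq_superposition (W : C(ℝ × E, E)) :
    velocity W = fun γ : C(I, E) => W.comp
      ((ContinuousLinearMap.inr ℝ ℝ E).compLeftContinuous ℝ I γ +
        ContinuousMap.prodMk ⟨Subtype.val, continuous_subtype_val⟩ 0) := by
  ext γ s
  simp [velocity]

theorem contDiff_picardResidual {n : ℕ∞} {W : C(ℝ × E, E)} (hW : ContDiff ℝ n W) :
    ContDiff ℝ n (picardResidual W) := by
  have hvelocity : ContDiff ℝ n (velocity W) := by
    rw [velocity_eq_superposition]
    exact (contDiff_superposition hW).comp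
      (((ContinuousLinearMap.inr ℝ ℝ E).compLeftContinuous ℝ I).contDiff.add contDiff_const)
  exact contDiff_id.sub ((primitive E).contDiff.comp hvelocity)

theorem picardResidual_const {W : C(ℝ × E, E)} {c : E} (hc : ∀ s : I, W (s, c) = 0) :
    picardResidual W (.const I c) = .const I c := by
  have hvelocity : velocity W (.const I c) = 0 := ContinuousMap.ext hc
  rw [picardResidual, hvelocity, map_zero, sub_zero]

theorem hasFDerivAt_picardResidual_of_fderiv_eq_zero {W : C(ℝ × E, E)} (hW : ContDiff ℝ 1 W)
    {γ : C(I, E)} (hγ : ∀ s : I, fderiv ℝ W (s, γ s) = 0) :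
    HasFDerivAt (picardResidual W) (ContinuousLinearMap.id ℝ C(I, E)) γ := by
  have hvelocity : HasFDerivAt (velocity W) (0 : C(I, E) →L[ℝ] C(I, E)) γ := by
    rw [velocity_eq_superposition]
    refine ((hasFDerivAt_superposition (f' := ⟨fderiv ℝ W, hW.continuous_fderiv (by simp)⟩)
      (fun x => (hW.differentiable (by simp) x).hasFDerivAt) _).comp γ
      (((ContinuousLinearMap.inr ℝ ℝ E).compLeftContinuous ℝ I).hasFDerivAt.add_const
        _)).congr_fderiv ?_
    ext g s
    simp [pointwiseApply, hγ s]
  exact ((hasFDerivAt_id γ).sub ((primitive E).hasFDerivAt.comp γ hvelocity)).congr_fderiv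
    (by simp)

theorem hasDerivWithinAt_of_picardResidual_eq_const [CompleteSpace E] {W : C(ℝ × E, E)}
    {γ : C(I, E)} {u : E} (hγ : picardResidual W γ = .const I u) (t : I) :
    HasDerivWithinAt (IccExtend zero_le_one γ) (W (t, γ t)) I t := by
  have hderiv : HasDerivAt (fun τ : ℝ => u + ∫ s in (0 : ℝ)..τ, IccExtend zero_le_one
      (velocity W γ) s) (velocity W γ t) t := by
    simpa using ((velocity W γ).continuous.Icc_extend'.integral_hasStrictDerivAt
      0 (t : ℝ)).hasDerivAt.const_add u
  refine hderiv.hasDerivWithinAt.congr_of_mem (fun τ hτ => ?_) t.2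
  rw [IccExtend_of_mem _ _ hτ]
  exact eq_add_of_sub_eq (DFunLike.congr_fun hγ ⟨τ, hτ⟩)

/-- The operator sending a curve `γ` to `s ↦ L (γ (lam * s))`, the form in which a scaling symmetry
`(s, u) ↦ (s / lam, L u)` of a time-dependent field acts on curves. -/
def rescale (L : E →L[ℝ] E) (lam : I) : C(I, E) →L[ℝ] C(I, E) :=
  L.compLeftContinuous ℝ I ∘L ContinuousMap.compCLM ℝ E (⟨(lam * ·), by fun_prop⟩ : C(I, I))

theorem rescale_apply (L : E →L[ℝ] E) (lam : I) (γ : C(I, E)) (s : I) :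
    rescale L lam γ s = L (γ (lam * s)) := rfl

theorem primitive_rescale [CompleteSpace E] (L : E →L[ℝ] E) (lam : I) (g : C(I, E)) :
    primitive E ((lam : ℝ) • rescale L lam g) = rescale L lam (primitive E g) := by
  ext t
  have hg : Continuous fun s => IccExtend (zero_le_one' ℝ) g (lam * s) :=
    g.continuous.Icc_extend'.comp (continuous_const_mul (lam : ℝ))
  have hsubst := intervalIntegral.smul_integral_comp_mul_left (a := 0) (b := (t : ℝ))
    (IccExtend (zero_le_one' ℝ) g) lam
  rw [mul_zero] at hsubst
  rw [map_smul, ContinuousMap.smul_apply, rescale_apply, primitive_apply, primitive_apply,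
    Icc.coe_mul, ← hsubst, map_smul, ← L.intervalIntegral_comp_comm
      (hg.intervalIntegrable _ _)]
  congr 1
  refine intervalIntegral.integral_congr fun s hs => ?_
  rw [uIcc_of_le t.2.1] at hs
  have hsI : s ∈ I := ⟨hs.1, hs.2.trans t.2.2⟩
  have hlam : (lam : ℝ) * s ∈ I := (lam * ⟨s, hsI⟩ : I).2
  simp only [IccExtend_of_mem _ _ hsI, IccExtend_of_mem _ _ hlam]
  rfl

theorem picardResidual_rescale [CompleteSpace E] {W : C(ℝ × E, E)} {L : E →L[ℝ] E} {lam : I}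
    (hL : ∀ (s : ℝ) (u : E), W (s, L u) = (lam : ℝ) • L (W (lam * s, u))) (γ : C(I, E)) :
    picardResidual W (rescale L lam γ) = rescale L lam (picardResidual W γ) := by
  have hvelocity : velocity W (rescale L lam γ) = (lam : ℝ) • rescale L lam (velocity W γ) :=
    ContinuousMap.ext fun s => hL s _
  rw [picardResidual, picardResidual, hvelocity, primitive_rescale, map_sub]

end Picard

section TimeOneMap

variable {E : Type u} [NormedAddCommGroup E] [NormedSpace ℝ E] [CompleteSpace E]
  {W : C(ℝ × E, E)} {L : ℝ → E →L[ℝ] E} {A : E →L[ℝ] E}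

theorem exists_openPartialHomeomorph_picardResidual {n : ℕ∞} (hn : n ≠ 0) (hW : ContDiff ℝ n W)
    {c : E} (hc : ∀ s : I, W (s, c) = 0) (hc' : ∀ s : I, fderiv ℝ W (s, c) = 0) :
    ∃ e : OpenPartialHomeomorph C(I, E) C(I, E), .const I c ∈ e.source ∧
      ⇑e = picardResidual W ∧ ContDiffOn ℝ n e.symm e.target ∧
      HasFDerivAt e.symm (ContinuousLinearMap.id ℝ C(I, E)) (.const I c) := by
  have hn' : (n : ℕ∞ω) ≠ 0 := mod_cast hn
  have hderiv : HasFDerivAt (picardResidual W)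
      (ContinuousLinearEquiv.refl ℝ C(I, E) : C(I, E) →L[ℝ] C(I, E)) (.const I c) :=
    hasFDerivAt_picardResidual_of_fderiv_eq_zero
      (hW.of_le (ENat.one_le_iff_ne_zero_withTop.2 hn')) hc'
  obtain ⟨e, hce, -, he, hsymm⟩ := exists_openPartialHomeomorph_contDiffOn_symm hn' isOpen_univ
    (contDiff_picardResidual hW).contDiffOn (mem_univ _) hderiv
  have hec : e (.const I c) = .const I c := by rw [he, picardResidual_const hc]
  refine ⟨e, hce, he, hsymm, e.hasFDerivAt_symm (f' := .refl ℝ C(I, E)) (hec ▸ e.map_source hce) ?_⟩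
  rwa [← hec, e.left_inv hce, he]

theorem eventually_symm_const_eq_rescale (hL : Continuous L) (hL1 : L 1 = .id ℝ E)
    (hscaling : ∀ (lam : I) (s : ℝ) (u : E),
      W (s, L lam u) = (lam : ℝ) • L lam (W (lam * s, u)))
    {e : OpenPartialHomeomorph C(I, E) C(I, E)} (he : ⇑e = picardResidual W) {u : E}
    (hu : .const I u ∈ e.target) :
    ∀ᶠ lam : I in 𝓝 1,
      e.symm (.const I (L lam u)) = rescale (L lam) lam (e.symm (.const I u)) := by
  set γ := e.symm (.const I u)
  have hcurve : Continuous fun q : I × I => γ (q.1 * q.2) := by fun_prop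
  have hcont : Continuous fun lam : I => rescale (L lam) lam γ :=
    ContinuousMap.continuous_of_continuous_uncurry _
      ((hL.comp (continuous_subtype_val.comp continuous_fst)).clm_apply hcurve)
  have hone : rescale (L (1 : I)) 1 γ = γ := by
    ext s
    simp [rescale_apply, hL1]
  have hmem : ∀ᶠ lam : I in 𝓝 1, rescale (L lam) lam γ ∈ e.source :=
    hcont.continuousAt.eventually_mem (e.open_source.mem_nhds (hone.symm ▸ e.map_target hu))
  filter_upwards [hmem] with lam hlam
  have hresidual : e (rescale (L lam) lam γ) = .const I (L lam u) := by
    rw [he, picardResidual_rescale (hscaling lam), ← he, e.right_inv hu]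
    rfl
  rw [← hresidual, e.left_inv hlam]

theorem fderiv_symm_const_apply_one (hL : Continuous L) (hL1 : L 1 = .id ℝ E)
    (hL' : HasDerivAt L A 1)
    (hscaling : ∀ (lam : I) (s : ℝ) (u : E),
      W (s, L lam u) = (lam : ℝ) • L lam (W (lam * s, u)))
    {e : OpenPartialHomeomorph C(I, E) C(I, E)} (he : ⇑e = picardResidual W) {u : E}
    (hu : .const I u ∈ e.target)
    (hdiff : DifferentiableAt ℝ (fun u => e.symm (.const I u) 1) u) :
    fderiv ℝ (fun u => e.symm (.const I u) 1) u (A u) =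
      A (e.symm (.const I u) 1) + W (1, e.symm (.const I u) 1) := by
  set γ := e.symm (.const I u)
  have hrescale : (fun lam => e.symm (.const I (L lam u)) 1) =ᶠ[𝓝[I] 1]
      fun lam => L lam (IccExtend zero_le_one γ lam) := by
    rw [EventuallyEq, nhdsWithin_eq_map_subtype_coe (right_mem_Icc.2 zero_le_one), eventually_map]
    filter_upwards [eventually_symm_const_eq_rescale hL hL1 hscaling he hu] with lam hlam
    rw [hlam, rescale_apply, mul_one, IccExtend_val]
  have hγ' : HasDerivWithinAt (IccExtend zero_le_one γ) (W (1, γ 1)) I 1 :=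
    hasDerivWithinAt_of_picardResidual_eq_const (by rw [← he, e.right_inv hu]) 1
  have hright : HasDerivWithinAt (fun lam => L lam (IccExtend zero_le_one γ lam))
      (A (γ 1) + W (1, γ 1)) I 1 := by
    simpa [hL1] using hL'.hasDerivWithinAt.clm_apply hγ'
  have hLu : HasDerivAt (fun lam => L lam u) (A u) 1 := by
    simpa using hL'.clm_apply (hasDerivAt_const 1 u)
  have hL1u : L 1 u = u := by rw [hL1, ContinuousLinearMap.id_apply]
  have hleft : HasDerivAt (fun lam => e.symm (.const I (L lam u)) 1)
      (fderiv ℝ (fun u => e.symm (.const I u) 1) u (A u)) 1 :=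
    hdiff.hasFDerivAt.comp_hasDerivAt_of_eq 1 hLu hL1u.symm
  refine (uniqueDiffOn_Icc zero_lt_one 1 (right_mem_Icc.2 zero_le_one)).eq_deriv _
    hleft.hasDerivWithinAt (hright.congr_of_eventuallyEq hrescale ?_)
  simp [hL1, γ]

theorem exists_conjugacy_of_scaling {n : ℕ∞} (hn : n ≠ 0) (hW : ContDiff ℝ n W)
    {c : E} (hc : ∀ s : I, W (s, c) = 0) (hc' : ∀ s : I, fderiv ℝ W (s, c) = 0)
    (hL : Continuous L) (hL1 : L 1 = .id ℝ E) (hL' : HasDerivAt L A 1)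
    (hscaling : ∀ (lam : I) (s : ℝ) (u : E),
      W (s, L lam u) = (lam : ℝ) • L lam (W (lam * s, u))) :
    ∃ (O : Set E) (Ψ : E → E), IsOpen O ∧ c ∈ O ∧ ContDiffOn ℝ n Ψ O ∧ Ψ c = c ∧
      HasFDerivAt Ψ (ContinuousLinearMap.id ℝ E) c ∧
      ∀ u ∈ O, fderiv ℝ Ψ u (A u) = A (Ψ u) + W (1, Ψ u) := by
  obtain ⟨e, hce, he, hsymm, hsymm'⟩ := exists_openPartialHomeomorph_picardResidual hn hW hc hc'
  have hec : e (.const I c) = .const I c := by rw [he, picardResidual_const hc]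
  let eval : C(I, E) →L[ℝ] E := ContinuousMap.evalCLM ℝ 1
  let const : E →L[ℝ] C(I, E) := ContinuousLinearMap.const ℝ I
  let O := const ⁻¹' e.target
  have hO : IsOpen O := e.open_target.preimage const.continuous
  have hΨ : ContDiffOn ℝ n (fun u => eval (e.symm (const u))) O :=
    eval.contDiff.comp_contDiffOn (hsymm.comp const.contDiff.contDiffOn fun _ => id)
  have hcO : .const I c ∈ e.target := hec ▸ e.map_source hce
  refine ⟨O, fun u => eval (e.symm (const u)), hO, hcO, hΨ, ?_,
    eval.hasFDerivAt.comp c (hsymm'.comp c const.hasFDerivAt), fun u hu => ?_⟩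
  · exact DFunLike.congr_fun ((congrArg e.symm hec.symm).trans (e.left_inv hce)) 1
  · exact fderiv_symm_const_apply_one hL hL1 hL' hscaling he hu
      ((hΨ.contDiffAt (hO.mem_nhds hu)).differentiableAt (mod_cast hn))

end TimeOneMap

section Dilation

variable {E : Type*} [NormedAddCommGroup E] [NormedSpace ℝ E]

/-- The operator `id + (s - 1) P`. For a projection `P` it multiplies the range of `P` by `s` and
fixes the kernel, so that `s ↦ dilation P s u` is the orbit of `P` through `u`, in the time
`log s`. -/
def dilation (P : E →L[ℝ] E) (s : ℝ) : E →L[ℝ] E := .id ℝ E + (s - 1) • P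

theorem dilation_apply (P : E →L[ℝ] E) (s : ℝ) (u : E) :
    dilation P s u = u + (s - 1) • P u := rfl

theorem dilation_one (P : E →L[ℝ] E) : dilation P 1 = .id ℝ E := by
  simp [dilation]

theorem contDiff_dilation (P : E →L[ℝ] E) {n : ℕ∞ω} : ContDiff ℝ n (dilation P) := by
  unfold dilation
  fun_prop

theorem hasDerivAt_dilation (P : E →L[ℝ] E) (s : ℝ) : HasDerivAt (dilation P) P s :=
  ((((hasDerivAt_id s).sub_const 1).smul_const P).const_add (.id ℝ E)).congr_deriv
    (one_smul ℝ P)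

variable {P : E →L[ℝ] E}

theorem apply_dilation (hP : IsIdempotentElem P) (s : ℝ) (u : E) :
    P (dilation P s u) = s • P u := by
  have hPP : P (P u) = P u := DFunLike.congr_fun hP u
  rw [dilation_apply, map_add, map_smul, hPP]
  module

theorem dilation_dilation (hP : IsIdempotentElem P) (s t : ℝ) (u : E) :
    dilation P s (dilation P t u) = dilation P (s * t) u := by
  rw [dilation_apply, apply_dilation hP, dilation_apply, dilation_apply]
  module

theorem dilation_dilation_one_sub (hP : IsIdempotentElem P) (lam s : ℝ) (u : E) :
    dilation P lam (dilation (1 - P) (lam * s) u) = lam • dilation (1 - P) s u := by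
  have hPP : P (P u) = P u := DFunLike.congr_fun hP u
  simp only [dilation_apply, sub_apply, one_apply_eq_self, map_add, map_sub, map_smul, hPP]
  module

end Dilation

section Blowup

variable {E : Type u} [NormedAddCommGroup E] [NormedSpace ℝ E] {P : E →L[ℝ] E}
  {Q : E → E →L[ℝ] E →L[ℝ] E}

/-- The time-dependent field `W` for which `s ↦ dilation P s (γ s)` is an orbit of
`z ↦ P z + Q z (P z) (P z)`, in the time `log s`, as soon as `γ' = W (s, γ)`. The operator
`dilation (1 - P) s` is the smooth extension of `s • (dilation P s)⁻¹` to `s = 0`. -/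
noncomputable def blowupField (P : E →L[ℝ] E) (Q : E → E →L[ℝ] E →L[ℝ] E) (z : ℝ × E) : E :=
  dilation (1 - P) z.1 (Q (dilation P z.1 z.2) (P z.2) (P z.2))

theorem contDiff_blowupField {n : ℕ∞ω} (hQ : ContDiff ℝ n Q) :
    ContDiff ℝ n (blowupField P Q) := by
  have hP : ContDiff ℝ n fun z : ℝ × E => P z.2 := P.contDiff.comp contDiff_snd
  have hdilation : ContDiff ℝ n fun z : ℝ × E => dilation P z.1 z.2 :=
    ((contDiff_dilation P).comp contDiff_fst).clm_apply contDiff_snd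
  exact ((contDiff_dilation (1 - P)).comp contDiff_fst).clm_apply
    (((hQ.comp hdilation).clm_apply hP).clm_apply hP)

theorem blowupField_of_apply_eq_zero {c : E} (hc : P c = 0) (s : ℝ) :
    blowupField P Q (s, c) = 0 := by
  simp [blowupField, hc]

theorem fderiv_blowupField_of_apply_eq_zero (hQ : Differentiable ℝ Q) {c : E} (hc : P c = 0)
    (s : ℝ) : fderiv ℝ (blowupField P Q) (s, c) = 0 := by
  have hdilation (P : E →L[ℝ] E) : Differentiable ℝ (dilation P) :=
    (contDiff_dilation P).differentiable one_ne_zero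
  have hP : Differentiable ℝ fun z : ℝ × E => P z.2 := by fun_prop
  have hpoint : Differentiable ℝ fun z : ℝ × E => dilation P z.1 z.2 :=
    ((hdilation P).comp differentiable_fst).clm_apply differentiable_snd
  have hcoeff : Differentiable ℝ fun z : ℝ × E =>
      dilation (1 - P) z.1 ∘L Q (dilation P z.1 z.2) (P z.2) :=
    ((hdilation (1 - P)).comp differentiable_fst).clm_comp ((hQ.comp hpoint).clm_apply hP)
  exact (hasFDerivAt_clm_apply_of_eq_zero (hcoeff _) (hP _) (by simp [hc]) hc).fderiv

theorem blowupField_dilation (hP : IsIdempotentElem P) (lam s : ℝ) (u : E) :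
    blowupField P Q (s, dilation P lam u) =
      lam • dilation P lam (blowupField P Q (lam * s, u)) := by
  simp only [blowupField, dilation_dilation_one_sub hP, dilation_dilation hP, apply_dilation hP,
    map_smul, smul_apply, mul_comm s]

theorem exists_conjugacy_idempotent_add_quadratic [FiniteDimensional ℝ E] {n : ℕ∞} (hn : n ≠ 0)
    (hP : IsIdempotentElem P) {S : Set E} (hS : IsOpen S) (hQ : ContDiffOn ℝ n Q S) {c : E}
    (hcS : c ∈ S) (hc : P c = 0) :
    ∃ (O : Set E) (Ψ : E → E), IsOpen O ∧ c ∈ O ∧ ContDiffOn ℝ n Ψ O ∧ MapsTo Ψ O S ∧ Ψ c = c ∧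
      HasFDerivAt Ψ (ContinuousLinearMap.id ℝ E) c ∧
      ∀ u ∈ O, fderiv ℝ Ψ u (P u) = P (Ψ u) + Q (Ψ u) (P (Ψ u)) (P (Ψ u)) := by
  have := FiniteDimensional.complete ℝ E
  obtain ⟨R, hR, hRQ⟩ := exists_contDiff_eventuallyEq hS hQ hcS
  obtain ⟨T, hTsub, hT, hcT⟩ := _root_.eventually_nhds_iff.1 (hRQ.and (hS.mem_nhds hcS))
  have hW : ContDiff ℝ n (blowupField P R) := contDiff_blowupField hR
  obtain ⟨O, Ψ, hO, hcO, hΨ, hΨc, hΨ', hconj⟩ :=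
    exists_conjugacy_of_scaling (W := ⟨blowupField P R, hW.continuous⟩) hn hW
      (fun s => blowupField_of_apply_eq_zero hc s)
      (fun s => fderiv_blowupField_of_apply_eq_zero (hR.differentiable (mod_cast hn)) hc s)
      (contDiff_dilation P (n := 0)).continuous (dilation_one P) (hasDerivAt_dilation P 1)
      (fun lam s u => blowupField_dilation hP lam s u)
  refine ⟨O ∩ Ψ ⁻¹' T, Ψ, hΨ.continuousOn.isOpen_inter_preimage hO hT,
    ⟨hcO, by rwa [mem_preimage, hΨc]⟩, hΨ.mono inter_subset_left, fun u hu => (hTsub _ hu.2).2,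
    hΨc, hΨ', fun u hu => ?_⟩
  simp [hconj u hu.1, blowupField, dilation_one, (hTsub _ hu.2).1]

theorem orbEquiv_idempotent_of_eq_smul_add_quadratic [FiniteDimensional ℝ E]
    (hP : IsIdempotentElem P) {Dom : Set E} (hDom : IsOpen Dom) (hQ : ContDiffOn ℝ ∞ Q Dom)
    {h : E → ℝ} (hh : ContDiffOn ℝ ∞ h Dom) (hh0 : ∀ z ∈ Dom, h z ≠ 0) {V N : E → E}
    (hV : ∀ z ∈ Dom, V z = h z • (P z + Q z (P z) (P z))) {c : E} (hcDom : c ∈ Dom)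
    (hc : P c = 0) (L : E ≃L[ℝ] E) (hN : ∀ y, L (N y) = P (L y)) : OrbEquiv Dom V N c 0 := by
  have := FiniteDimensional.complete ℝ E
  obtain ⟨O, Ψ, hO, hcO, hΨ, hΨO, hΨc, hΨ', hconj⟩ :=
    exists_conjugacy_idempotent_add_quadratic (by simp) hP hDom hQ hcDom hc
  let τ : E → E := fun y => c + L y
  have hτ (y : E) : HasFDerivAt τ (L : E →L[ℝ] E) y := L.hasFDerivAt.const_add c
  have hτsmooth : ContDiff ℝ ∞ τ := contDiff_const.add L.contDiff
  have hτ0 : τ 0 = c := by simp [τ]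
  have hΨτ0 : (Ψ ∘ τ) 0 = c := by rw [Function.comp_apply, hτ0, hΨc]
  rw [← hΨτ0]
  refine orbEquiv_of_local_conjugacy (hO.preimage hτsmooth.continuous) (by rwa [mem_preimage, hτ0])
    (hΨ.comp hτsmooth.contDiffOn fun _ => id) (fun y hy => hΨO hy)
    ((hτ0.symm ▸ hΨ').comp 0 (hτ 0)) hh hh0 fun y hy => ?_
  have hΨy : DifferentiableAt ℝ Ψ (τ y) :=
    (hΨ.contDiffAt (hO.mem_nhds hy)).differentiableAt (by simp)
  have hPτ : L (N y) = P (τ y) := by simp [τ, hN, hc]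
  rw [(hΨy.hasFDerivAt.comp y (hτ y)).fderiv, ContinuousLinearMap.comp_apply,
    ContinuousLinearEquiv.coe_coe, hPτ, hconj _ hy]
  exact hV _ (hΨO hy)

end Blowup

section AlmostRiemannian

variable {D : Set (ℝ × ℝ)} {v : ℝ × ℝ → ℝ}

theorem contDiffOn_d1 {m n : ℕ∞ω} (hD : IsOpen D) (hv : ContDiffOn ℝ n v D) (hmn : m + 1 ≤ n) :
    ContDiffOn ℝ m (d1 v) D :=
  (hv.fderiv_of_isOpen hD hmn).clm_apply contDiffOn_const

theorem contDiffOn_d2 {m n : ℕ∞ω} (hD : IsOpen D) (hv : ContDiffOn ℝ n v D) (hmn : m + 1 ≤ n) :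
    ContDiffOn ℝ m (d2 v) D :=
  (hv.fderiv_of_isOpen hD hmn).clm_apply contDiffOn_const

/-- The projection `(x, y, p) ↦ (x, 0, p)`, which is the linear part of the field after division by
the unit `v`. -/
def nodeProj : ℝ × ℝ × ℝ →L[ℝ] ℝ × ℝ × ℝ :=
  .prodMap (.id ℝ ℝ) (.prodMap 0 (.id ℝ ℝ))

theorem isIdempotentElem_nodeProj : IsIdempotentElem nodeProj := rfl

/-- The linear change of coordinates `(ξ, η, ζ) ↦ (ξ, ζ, η)`, which carries the model field
`(ξ, η, 0)` to `nodeProj`. -/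
def swapLast : (ℝ × ℝ × ℝ) ≃L[ℝ] ℝ × ℝ × ℝ :=
  .prodCongr (.refl ℝ ℝ) (.prodComm ℝ ℝ ℝ)

/-- The coefficients `Q z` of the nonlinear part `Q z (P z) (P z)`, `P = nodeProj`, of the field
after division by the unit `v`: the monomials `x p` and `p ^ 2` are split off as the two
arguments. -/
noncomputable def nodeQuadratic (v : ℝ × ℝ → ℝ) (z : ℝ × ℝ × ℝ) :
    ℝ × ℝ × ℝ →L[ℝ] ℝ × ℝ × ℝ →L[ℝ] ℝ × ℝ × ℝ :=
  let x : ℝ × ℝ × ℝ →L[ℝ] ℝ := .fst ℝ ℝ (ℝ × ℝ)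
  let p : ℝ × ℝ × ℝ →L[ℝ] ℝ := .snd ℝ ℝ ℝ ∘L .snd ℝ ℝ (ℝ × ℝ)
  let q := (z.1, z.2.1)
  x.smulRight (p.smulRight ((0 : ℝ), 2 * z.1, -2 * (z.1 * z.2.2 * d2 v q + d1 v q) / v q)) +
    p.smulRight (p.smulRight ((0 : ℝ), (0 : ℝ), (v q ^ 2 - z.1 * v q * d1 v q) * z.2.2))

theorem nodeProj_add_nodeQuadratic (v : ℝ × ℝ → ℝ) (x y p : ℝ) :
    nodeProj (x, y, p) +
        nodeQuadratic v (x, y, p) (nodeProj (x, y, p)) (nodeProj (x, y, p)) =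
      (x, 2 * x ^ 2 * p, p - 2 * x * p * (x * p * d2 v (x, y) + d1 v (x, y)) / v (x, y) +
        (v (x, y) ^ 2 - x * v (x, y) * d1 v (x, y)) * p ^ 3) := by
  ext <;> simp [nodeProj, nodeQuadratic] <;> ring

theorem contDiffOn_nodeQuadratic {m n : ℕ∞ω} (hD : IsOpen D) (hv : ContDiffOn ℝ n v D)
    (hv0 : ∀ q ∈ D, v q ≠ 0) (hmn : m + 1 ≤ n) :
    ContDiffOn ℝ m (nodeQuadratic v) {z | (z.1, z.2.1) ∈ D} := by
  let S : Set (ℝ × ℝ × ℝ) := {z | (z.1, z.2.1) ∈ D}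
  have hbase : ContDiff ℝ m fun z : ℝ × ℝ × ℝ => (z.1, z.2.1) := by fun_prop
  have hx : ContDiffOn ℝ m (fun z : ℝ × ℝ × ℝ => z.1) S := contDiff_fst.contDiffOn
  have hp : ContDiffOn ℝ m (fun z : ℝ × ℝ × ℝ => z.2.2) S := contDiff_snd.snd.contDiffOn
  have hvS : ContDiffOn ℝ m (fun z => v (z.1, z.2.1)) S :=
    (hv.of_le (le_self_add.trans hmn)).comp hbase.contDiffOn fun _ => id
  have hvx : ContDiffOn ℝ m (fun z => d1 v (z.1, z.2.1)) S :=
    (contDiffOn_d1 hD hv hmn).comp hbase.contDiffOn fun _ => id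
  have hvy : ContDiffOn ℝ m (fun z => d2 v (z.1, z.2.1)) S :=
    (contDiffOn_d2 hD hv hmn).comp hbase.contDiffOn fun _ => id
  have hxp : ContDiffOn ℝ m (fun z : ℝ × ℝ × ℝ => ((0 : ℝ), 2 * z.1,
      -2 * (z.1 * z.2.2 * d2 v (z.1, z.2.1) + d1 v (z.1, z.2.1)) / v (z.1, z.2.1))) S :=
    contDiffOn_const.prodMk ((contDiffOn_const.mul hx).prodMk
      ((contDiffOn_const.mul (((hx.mul hp).mul hvy).add hvx)).div hvS fun z hz => hv0 _ hz))
  have hpp : ContDiffOn ℝ m (fun z : ℝ × ℝ × ℝ => ((0 : ℝ), (0 : ℝ),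
      (v (z.1, z.2.1) ^ 2 - z.1 * v (z.1, z.2.1) * d1 v (z.1, z.2.1)) * z.2.2)) S :=
    contDiffOn_const.prodMk (contDiffOn_const.prodMk
      (((hvS.pow 2).sub ((hx.mul hvS).mul hvx)).mul hp))
  exact (contDiffOn_const.smulRight (contDiffOn_const.smulRight hxp)).add
    (contDiffOn_const.smulRight (contDiffOn_const.smulRight hpp))

end AlmostRiemannian

/-- Almost-Riemannian metric with orthonormal frame `∂/∂x`, `2x v⁻¹ ∂/∂y`: at a singular
point `(0, y*, 0)` the germ of `V = (xv, 2x²vp, M)` is `C^∞`-smoothly orbitally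
equivalent to `ξ̇ = ξ, η̇ = η, ζ̇ = 0` (a bicritical node times a trivial factor). -/
theorem stmt19 (D : Set (ℝ × ℝ)) (hD : IsOpen D)
    (v : ℝ × ℝ → ℝ) (hv : ContDiffOn ℝ (⊤ : ℕ∞) v D)
    (hv0 : ∀ q ∈ D, v q ≠ 0)
    (M : ℝ × ℝ × ℝ → ℝ)
    (hM : M = fun z =>
      (v (z.1, z.2.1) ^ 3 - z.1 * v (z.1, z.2.1) ^ 2 * d1 v (z.1, z.2.1)) * z.2.2 ^ 3 -
      2 * z.1 ^ 2 * d2 v (z.1, z.2.1) * z.2.2 ^ 2 +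
      (v (z.1, z.2.1) - 2 * z.1 * d1 v (z.1, z.2.1)) * z.2.2)
    (V : ℝ × ℝ × ℝ → ℝ × ℝ × ℝ)
    (hV : V = fun z => (z.1 * v (z.1, z.2.1), 2 * z.1 ^ 2 * v (z.1, z.2.1) * z.2.2, M z))
    (ys : ℝ) (hq : ((0 : ℝ), ys) ∈ D) :
    V ((0 : ℝ), ys, (0 : ℝ)) = 0 ∧
    OrbEquiv {z : ℝ × ℝ × ℝ | (z.1, z.2.1) ∈ D} V
      (fun y : ℝ × ℝ × ℝ => (y.1, y.2.1, (0 : ℝ))) ((0 : ℝ), ys, (0 : ℝ)) 0 := by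
  have hdomain : IsOpen {z : ℝ × ℝ × ℝ | (z.1, z.2.1) ∈ D} := hD.preimage (by fun_prop)
  have hunit : ContDiffOn ℝ ∞ (fun z : ℝ × ℝ × ℝ => v (z.1, z.2.1)) {z | (z.1, z.2.1) ∈ D} :=
    hv.comp (by fun_prop) fun _ => id
  have hnormal : ∀ z ∈ {z : ℝ × ℝ × ℝ | (z.1, z.2.1) ∈ D},
      V z = v (z.1, z.2.1) • (nodeProj z + nodeQuadratic v z (nodeProj z) (nodeProj z)) := by
    rintro ⟨x, y, p⟩ hxy
    have hvxy : v (x, y) ≠ 0 := hv0 _ hxy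
    simp only [hV, hM, nodeProj_add_nodeQuadratic, Prod.smul_mk, smul_eq_mul, Prod.mk.injEq]
    exact ⟨by ring, by ring, by field_simp; ring⟩
  exact ⟨by simp [hV, hM], orbEquiv_idempotent_of_eq_smul_add_quadratic isIdempotentElem_nodeProj
    hdomain (contDiffOn_nodeQuadratic hD hv hv0 le_rfl) hunit (fun _ => hv0 _) hnormal hq
    (by simp [nodeProj]) swapLast fun _ => rfl⟩
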